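/- arXiv:1805.10051 — 3 statements merged into one kernel-verified Lean document; each statement's English description precedes it below -/
import Mathlib

section
/- A cyclic hinge that can be put in normal form is torsion-free: if a cyclic path of edges (u_i:p_i, γ_{i+1}, u_{i+1}:q_{i+1}) ∈ E(G), i = 0,…,m, with u_{m+1} = u_0, is in normal form, then it does not constitute a torsion, i.e., every k-face F at u_0 satisfying the hinge conditions is mapped to itself by the composed gluings. -/
namespace CDDM

open Equiv Set

/-- The set of ports `π = {0,…,n+1}`. -/
abbrev Port (n : ℕ) := Fin (n + 2)

/-- Gluings are the odd permutations of the ports. -/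
def IsGluing {n : ℕ} (γ : Equiv.Perm (Port n)) : Prop := Equiv.Perm.sign γ = -1

/-- Rotations are the even permutations of the ports. -/
def IsRotation {n : ℕ} (r : Equiv.Perm (Port n)) : Prop := Equiv.Perm.sign r = 1

/-- An (oriented) edge `(u:p, γ, v:q)`. -/
@[ext] structure Edge (n : ℕ) (α : Type) where
  u : α
  p : Port n
  γ : Equiv.Perm (Port n)
  v : α
  q : Port n

/-- The inverse edge `(v:q, γ⁻¹, u:p)`. -/
def Edge.inv {n : ℕ} {α : Type} (e : Edge n α) : Edge n α := ⟨e.v, e.q, e.γ⁻¹, e.u, e.p⟩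

/-- Raw data of a graph: vertices, semi-edges and edges. -/
@[ext] structure RawGraph (n : ℕ) (α : Type) where
  verts : Set α
  semis : Set (α × Port n)
  edges : Set (Edge n α)

variable {n : ℕ} {α β : Type}

/-- The ports of a vertex: those appearing in `S(G) ∪ E(G)`. -/
def RawGraph.portsAt (G : RawGraph n α) (u : α) : Set (Port n) :=
  {p | (u, p) ∈ G.semis ∨ ∃ e ∈ G.edges, e.u = u ∧ e.p = p}

/-- The five defining conditions of graphs (plus membership of endpoints and
gluings being odd permutations). -/
def RawGraph.IsGraph (G : RawGraph n α) : Prop :=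
  (∀ s ∈ G.semis, s.1 ∈ G.verts) ∧
  (∀ e ∈ G.edges, e.u ∈ G.verts ∧ e.v ∈ G.verts ∧ IsGluing e.γ) ∧
  -- (i) semi-edges and edges are disjoint per port
  (∀ e ∈ G.edges, (e.u, e.p) ∉ G.semis) ∧
  -- (ii) each port occurs in at most one edge
  (∀ e ∈ G.edges, ∀ e' ∈ G.edges, e.u = e'.u → e.p = e'.p → e = e') ∧
  -- (iii) each vertex has exactly n+1 ports
  (∀ u ∈ G.verts, (G.portsAt u).ncard = n + 1) ∧
  -- (iv) the gluing maps the ports of the source onto the ports of the target, sending p to q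
  (∀ e ∈ G.edges, (⇑e.γ) '' G.portsAt e.u = G.portsAt e.v ∧ e.γ e.p = e.q) ∧
  -- (v) edges come in inverse pairs
  (∀ e ∈ G.edges, e.inv ∈ G.edges)

/-- Action of the vertex rotation `r_u` on a single edge. -/
noncomputable def rotEdge (r : Equiv.Perm (Port n)) (u : α) (e : Edge n α) : Edge n α :=
  letI := Classical.decEq α
  ⟨e.u, if e.u = u then r e.p else e.p,
   (if e.v = u then r * e.γ else e.γ) * (if e.u = u then r⁻¹ else 1),
   e.v, if e.v = u then r e.q else e.q⟩

/-- The vertex rotation `r_u` applied to a graph. -/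
noncomputable def rotG (r : Equiv.Perm (Port n)) (u : α) (G : RawGraph n α) : RawGraph n α :=
  letI := Classical.decEq α
  { verts := G.verts
    semis := (fun s => if s.1 = u then (s.1, r s.2) else s) '' G.semis
    edges := rotEdge r u '' G.edges }

/-- A rotation sequence: a finite composition of vertex rotations. -/
abbrev RotSeq (n : ℕ) (α : Type) := List (α × Equiv.Perm (Port n))

/-- Application of a rotation sequence to a graph. -/
noncomputable def applySeq (s : RotSeq n α) (G : RawGraph n α) : RawGraph n α :=
  s.foldr (fun x H => rotG x.2 x.1 H) G

/-- All members of the sequence are rotations (even permutations). -/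
def IsRotSeq (s : RotSeq n α) : Prop := ∀ x ∈ s, IsRotation x.2

/-- `(r̄ / u)`: the ordered composition of the rotations of `r̄` at the vertex `u`. -/
noncomputable def seqAt (s : RotSeq n α) (u : α) : Equiv.Perm (Port n) :=
  letI := Classical.decEq α
  s.foldr (fun x g => if x.1 = u then x.2 * g else g) 1

/-- The rotation sequence acts at vertex `u`. -/
def SeqActsAt (s : RotSeq n α) (u : α) : Prop := ∃ x ∈ s, x.1 = u

/-- Consistency of two rotation sequences: whenever both act upon a common vertex,
their compositions at that vertex coincide. -/
def SeqConsistent (s₁ s₂ : RotSeq n α) : Prop :=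
  ∀ u : α, SeqActsAt s₁ u → SeqActsAt s₂ u → seqAt s₁ u = seqAt s₂ u

/-- The inverse of a rotation sequence. -/
def invSeq (s : RotSeq n α) : RotSeq n α := (s.map (fun x => (x.1, x.2⁻¹))).reverse

/-- Consistency of two graphs. -/
def Consistent (G H : RawGraph n α) : Prop :=
  ∀ u ∈ G.verts ∩ H.verts, ∀ v ∈ G.verts ∪ H.verts,
    ∀ (i j : Port n) (γ : Equiv.Perm (Port n)),
      (Edge.mk u i γ v j ∈ G.edges ∨ (u, i) ∈ G.semis) ↔
      (Edge.mk u i γ v j ∈ H.edges ∨ (u, i) ∈ H.semis)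

/-- Union of two (consistent) graphs: semi-edges are the ports occurring as
semi-edges in `G` or `H` and in no edge of `E(G) ∪ E(H)`. -/
def unionG (G H : RawGraph n α) : RawGraph n α where
  verts := G.verts ∪ H.verts
  semis := {s | s ∈ G.semis ∪ H.semis ∧ ∀ e ∈ G.edges ∪ H.edges, ¬(e.u = s.1 ∧ e.p = s.2)}
  edges := G.edges ∪ H.edges

/-- Union of a family of graphs. -/
def unionFam {ι : Type} (Gs : ι → RawGraph n α) : RawGraph n α where
  verts := ⋃ i, (Gs i).verts
  semis := {s | (∃ i, s ∈ (Gs i).semis) ∧ ∀ i, ∀ e ∈ (Gs i).edges, ¬(e.u = s.1 ∧ e.p = s.2)}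
  edges := ⋃ i, (Gs i).edges

/-- A path of `k` edges `(u_i:p_i, γ_{i+1}, u_{i+1}:q_{i+1})` in `G`. -/
def IsPath (G : RawGraph n α) (k : ℕ) (u : Fin (k+1) → α)
    (p : Fin k → Port n) (γ : Fin k → Equiv.Perm (Port n)) (q : Fin k → Port n) : Prop :=
  ∀ i : Fin k, Edge.mk (u i.castSucc) (p i) (γ i) (u i.succ) (q i) ∈ G.edges

/-- `γ_i ∘ ⋯ ∘ γ_1`: the composition of the first `i` gluings of the path. -/
def compUpTo {n k : ℕ} (γ : Fin k → Equiv.Perm (Port n)) (i : ℕ) : Equiv.Perm (Port n) :=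
  (((List.ofFn γ).take i).reverse).prod

/-- The hinge conditions: `p_i, q_i ∉ (γ_i ∘ ⋯ ∘ γ_1)(F)`. -/
def HingeConds {n k : ℕ} (p : Fin k → Port n) (γ : Fin k → Equiv.Perm (Port n))
    (q : Fin k → Port n) (F : Set (Port n)) : Prop :=
  ∀ i : Fin k, p i ∉ (⇑(compUpTo γ i.val)) '' F ∧ q i ∉ (⇑(compUpTo γ (i.val + 1))) '' F

/-- A hinge of length `k` starting at the face `F` at `u 0`. -/
def IsHinge (G : RawGraph n α) (k : ℕ) (u : Fin (k+1) → α)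
    (p : Fin k → Port n) (γ : Fin k → Equiv.Perm (Port n)) (q : Fin k → Port n)
    (F : Set (Port n)) : Prop :=
  IsPath G k u p γ q ∧ F.Nonempty ∧ F ⊆ G.portsAt (u 0) ∧ HingeConds p γ q F

/-- Equivalence of faces: `F` at `u` and `F'` at `u'` are related by a hinge. -/
def EquivFace (G : RawGraph n α) (u : α) (F : Set (Port n)) (u' : α) (F' : Set (Port n)) :
    Prop :=
  ∃ (k : ℕ) (w : Fin (k+1) → α) (p : Fin k → Port n) (γ : Fin k → Equiv.Perm (Port n))
    (q : Fin k → Port n), IsHinge G k w p γ q F ∧ w 0 = u ∧ w (Fin.last k) = u' ∧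
      F' = (⇑(compUpTo γ k)) '' F

/-- A torsion: a hinge around two distinct faces at the same vertex. -/
def HasTorsion (G : RawGraph n α) : Prop :=
  ∃ (u : α) (F F' : Set (Port n)), F ≠ F' ∧ EquivFace G u F u F'

/-- `s`-bounded-star: every hinge has length at most `s`. -/
def BoundedStar (G : RawGraph n α) (s : ℕ) : Prop :=
  ∀ (k : ℕ) (u : Fin (k+1) → α) (p : Fin k → Port n) (γ : Fin k → Equiv.Perm (Port n))
    (q : Fin k → Port n) (F : Set (Port n)), IsHinge G k u p γ q F → k ≤ s

/-- A path is in normal form. -/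
def NormalForm (G : RawGraph n α) {k : ℕ} (u : Fin (k+1) → α)
    (p : Fin k → Port n) (γ : Fin k → Equiv.Perm (Port n)) (q : Fin k → Port n) : Prop :=
  ∀ i : Fin k, γ i = Equiv.swap (p i) (q i) ∧
    G.portsAt (u i.succ) = insert (q i) (G.portsAt (u i.castSucc) \ {p i})

/-- The covering semi-edges of a face `F` at `u`. -/
def coveringSemis (G : RawGraph n α) (u : α) (F : Set (Port n)) : Set (α × Port n) :=
  {s | s ∈ G.semis ∧ ∃ F', EquivFace G u F s.1 F' ∧ s.2 ∉ F'}

/-- Geometrical neighbors: vertices sharing an equivalent face. -/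
def GeomNeighbor (G : RawGraph n α) (u u' : α) : Prop :=
  ∃ F F', EquivFace G u F u' F'

/-- Induced subgraph on a set of vertices, breaking outgoing edges into semi-edges. -/
def inducedSub (G : RawGraph n α) (W : Set α) : RawGraph n α where
  verts := G.verts ∩ W
  semis := {s | s.1 ∈ G.verts ∩ W ∧
    (s ∈ G.semis ∨ ∃ e ∈ G.edges, e.u = s.1 ∧ e.p = s.2 ∧ e.v ∉ W)}
  edges := {e ∈ G.edges | e.u ∈ W ∧ e.v ∈ W}

/-- The star of a vertex: the subgraph induced by `u` and its geometrical neighbors. -/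
def geomStar (G : RawGraph n α) (u : α) : RawGraph n α :=
  inducedSub G {v | v = u ∨ GeomNeighbor G u v}

/-- Adjacency via edges. -/
def Adj (G : RawGraph n α) (u v : α) : Prop := ∃ e ∈ G.edges, e.u = u ∧ e.v = v

/-- Graph distance at most `d`. -/
inductive ReachLE (G : RawGraph n α) : ℕ → α → α → Prop
  | refl (d : ℕ) (u : α) : ReachLE G d u u
  | step {d : ℕ} {u v w : α} : Adj G u v → ReachLE G d v w → ReachLE G (d+1) u w

/-- The ball of radius `d` around `v`. -/
def ball (G : RawGraph n α) (v : α) (d : ℕ) : Set α := {u | ReachLE G d v u}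

/-- The disk `G^r_v`: subgraph induced by vertices at graph distance at most `r+1`,
with outgoing edges broken into semi-edges. -/
def disk (G : RawGraph n α) (v : α) (r : ℕ) : RawGraph n α :=
  inducedSub G (ball G v (r+1))

/-- Being a disk of radius `r` (an element of `D^r`). -/
def IsDisk (D : RawGraph n α) (r : ℕ) : Prop :=
  ∃ (G : RawGraph n α) (v : α), G.IsGraph ∧ v ∈ G.verts ∧ D = disk G v r

/-- Subgraph relation. -/
def Subgraph (H G : RawGraph n α) : Prop := H.verts ⊆ G.verts ∧ H.edges ⊆ G.edges

/-- Compound names: finite sets of pairs `(u, i)` representing `{u.i, v.j, …}`. -/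
abbrev CName := Finset (ℕ × ℕ)

/-- Renaming of graphs along a map on vertex names. -/
def mapG (R : α → β) (G : RawGraph n α) : RawGraph n β where
  verts := R '' G.verts
  semis := (fun s => (R s.1, s.2)) '' G.semis
  edges := (fun e => Edge.mk (R e.u) e.p e.γ (R e.v) e.q) '' G.edges

/-- `R*`: renaming of compound names. -/
def mapCN (R : ℕ → ℕ) (c : CName) : CName := c.image (fun x => (R x.1, x.2))

/-- A local rule of radius `r` over the universe of names `ℕ`, with bound `b`. -/
structure LocalRule (n r : ℕ) where
  f : RawGraph n ℕ → RawGraph n CName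
  b : ℕ
  isGraph : ∀ D, IsDisk D r → (f D).IsGraph
  bound : ∀ D, IsDisk D r → ∀ c ∈ (f D).verts, ∀ x ∈ c, x.1 ∈ D.verts ∧ x.2 ≤ b
  consist : ∀ G : RawGraph n ℕ, G.IsGraph → ∀ v ∈ G.verts, ∀ w ∈ G.verts,
    Consistent (f (disk G v r)) (f (disk G w r))
  equivar : ∀ R : ℕ ≃ ℕ, ∀ D, IsDisk D r → f (mapG R D) = mapG (mapCN R) (f D)

/-- The global dynamics induced by a local rule: `F(G) = ⋃_{v ∈ G} f(G^r_v)`. -/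
noncomputable def induced (f : RawGraph n ℕ → RawGraph n CName) (r : ℕ)
    (G : RawGraph n ℕ) : RawGraph n CName :=
  unionFam (fun v : G.verts => f (disk G (v : ℕ) r))

/-- A dynamics is rotation-commuting. -/
def RotCommuting {n : ℕ} (F : RawGraph n ℕ → RawGraph n CName) : Prop :=
  ∀ G : RawGraph n ℕ, G.IsGraph → ∀ s : RotSeq n ℕ, IsRotSeq s →
    ∃ s' : RotSeq n CName, IsRotSeq s' ∧ F (applySeq s G) = applySeq s' (F G)

/-- An intersecting pair of disks `D₁, D₂` of a common graph. -/
def IntersectingDiskPair (r : ℕ) (D₁ D₂ : RawGraph n ℕ) : Prop :=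
  ∃ (G : RawGraph n ℕ) (v₁ v₂ : ℕ), G.IsGraph ∧ v₁ ∈ G.verts ∧ v₂ ∈ G.verts ∧
    D₁ = disk G v₁ r ∧ D₂ = disk G v₂ r ∧ (D₁.verts ∩ D₂.verts).Nonempty

/-- A local rule is strongly-rotation-commuting. -/
def StronglyRotCommuting {n r : ℕ} (L : LocalRule n r) : Prop :=
  (∀ D, IsDisk D r → ∀ s : RotSeq n ℕ, IsRotSeq s →
    ∃ s' : RotSeq n CName, IsRotSeq s' ∧ L.f (applySeq s D) = applySeq s' (L.f D)) ∧
  (∀ D₁ D₂, IntersectingDiskPair r D₁ D₂ → ∀ s : RotSeq n ℕ, IsRotSeq s →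
    ∀ s₁ s₂ : RotSeq n CName, IsRotSeq s₁ → IsRotSeq s₂ →
      L.f (applySeq s D₁) = applySeq s₁ (L.f D₁) →
      L.f (applySeq s D₂) = applySeq s₂ (L.f D₂) →
      ∀ c ∈ (L.f D₁).verts ∩ (L.f D₂).verts, seqAt s₁ c = seqAt s₂ c)

/-- The transposition `s₀₁` of the ports 0 and 1. -/
def sw01 (n : ℕ) : Equiv.Perm (Port n) := Equiv.swap 0 1

/-- The canonical sphere `∂Δ_{n+1}` on the vertex names `φ 0, …, φ (n+1)`. -/
def sphereAt {n : ℕ} {α : Type} (φ : Fin (n+2) → α) : RawGraph n α where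
  verts := Set.range φ
  semis := ∅
  edges := {e | ∃ i j : Fin (n+2), i ≠ j ∧ e = ⟨φ i, j, Equiv.swap i j, φ j, i⟩}

/-- A bistellar move: replacing the part `H = φ '' W` of a canonical sphere lying in `G`
by its complement `s̄ H*`. -/
def BistellarMove (G G' : RawGraph n α) : Prop :=
  ∃ (φ : Fin (n+2) → α) (W : Set (Fin (n+2))),
    Function.Injective φ ∧ W.Nonempty ∧ W ≠ Set.univ ∧
    (∀ i ∈ W, φ i ∈ G.verts) ∧ (∀ i ∉ W, φ i ∉ G.verts) ∧
    (∀ i ∈ W, ∀ j ∈ W, i ≠ j → Edge.mk (φ i) j (Equiv.swap i j) (φ j) i ∈ G.edges) ∧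
    (∀ i ∈ W, G.portsAt (φ i) = {j | j ≠ i}) ∧
    G'.verts = (G.verts \ (φ '' W)) ∪ (φ '' Wᶜ) ∧
    G'.edges =
      ({e ∈ G.edges | e.u ∉ φ '' W ∧ e.v ∉ φ '' W} ∪
       {e | ∃ i j : Fin (n+2), i ∉ W ∧ j ∉ W ∧ i ≠ j ∧
          e = Edge.mk (φ i) (sw01 n j) (sw01 n * Equiv.swap i j * sw01 n) (φ j) (sw01 n i)} ∪
       {e | ∃ e' ∈ G.edges, ∃ i ∈ W, e'.u = φ i ∧ e'.v ∉ φ '' W ∧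
          (e = Edge.mk (φ e'.p) (sw01 n i) (e'.γ * (Equiv.swap i e'.p * sw01 n)) e'.v e'.q ∨
           e = Edge.mk e'.v e'.q (e'.γ * (Equiv.swap i e'.p * sw01 n))⁻¹ (φ e'.p) (sw01 n i))}) ∧
    G'.semis =
      ({s ∈ G.semis | s.1 ∉ φ '' W} ∪
       {s | ∃ j ∈ W, ∃ p : Fin (n+2), p ∉ W ∧ (φ j, p) ∈ G.semis ∧ s = (φ p, sw01 n j)})

/-- A graph-local inverse shelling: gluing a fresh vertex `v` onto a set `S` of at most `n`
free ports of `u`, via the gluing `s₀₁`. -/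
def LocalInvShelling (G G' : RawGraph n α) : Prop :=
  ∃ u ∈ G.verts, ∃ (S : Set (Port n)) (v : α),
    v ∉ G.verts ∧ S.ncard ≤ n ∧ (∀ p ∈ S, (u, p) ∈ G.semis) ∧
    G'.verts = insert v G.verts ∧
    G'.edges = G.edges ∪ {e | ∃ p ∈ S, e = Edge.mk u p (sw01 n) v (sw01 n p) ∨
                                        e = Edge.mk v (sw01 n p) (sw01 n) u p} ∧
    G'.semis = (G.semis \ {s | s.1 = u ∧ s.2 ∈ S}) ∪
               {s | ∃ p ∈ G.portsAt u \ S, s = (v, sw01 n p)}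

/-- Graph-local Pachner moves: vertex rotations, bistellar moves, and
graph-local (inverse) shellings. -/
inductive PachnerMove (n : ℕ) {α : Type} : RawGraph n α → RawGraph n α → Prop
  | rot {G : RawGraph n α} {r : Equiv.Perm (Port n)} {u : α} :
      IsRotation r → u ∈ G.verts → PachnerMove n G (rotG r u G)
  | bist {G G' : RawGraph n α} : BistellarMove G G' → PachnerMove n G G'
  | bistInv {G G' : RawGraph n α} : BistellarMove G' G → PachnerMove n G G'
  | shellInv {G G' : RawGraph n α} : LocalInvShelling G G' → PachnerMove n G G'
  | shell {G G' : RawGraph n α} : LocalInvShelling G' G → PachnerMove n G G'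

/-- `Δ_n`: a single vertex, all of whose `n+1` ports are semi-edges. -/
def IsSimplexGraph (G : RawGraph n α) : Prop :=
  ∃ (v : α) (P : Set (Port n)), P.ncard = n + 1 ∧ G.verts = {v} ∧ G.edges = ∅ ∧
    G.semis = {s | s.1 = v ∧ s.2 ∈ P}

/-- A discrete manifold: the star of every vertex can be sent onto `Δ_n` by
graph-local Pachner moves. -/
def DiscreteManifold (G : RawGraph n α) : Prop :=
  G.IsGraph ∧ ∀ u ∈ G.verts,
    ∃ H : RawGraph n α, Relation.ReflTransGen (PachnerMove n) (geomStar G u) H ∧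
      IsSimplexGraph H

/-- A standard inverse shelling `G.F` at a border `k`-face `F` at `u` having exactly
`n-k` covering semi-edges. -/
def StdInvShelling (G G' : RawGraph n α) : Prop :=
  ∃ u ∈ G.verts, ∃ (F : Set (Port n)) (k : ℕ),
    F ⊆ G.portsAt u ∧ F.ncard = k + 1 ∧
    (coveringSemis G u F).Nonempty ∧ (coveringSemis G u F).ncard = n - k ∧
    ∃ v : α, v ∉ G.verts ∧ G'.IsGraph ∧ ¬ HasTorsion G' ∧
      G'.verts = insert v G.verts ∧
      G'.edges = G.edges ∪ {e | ∃ s ∈ coveringSemis G u F,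
        e = Edge.mk s.1 s.2 (sw01 n) v (sw01 n s.2) ∨
        e = Edge.mk v (sw01 n s.2) (sw01 n) s.1 s.2} ∧
      (∀ s : α × Port n, s.1 ≠ v → (s ∈ G'.semis ↔ s ∈ G.semis ∧ s ∉ coveringSemis G u F))

/-- A cyclic hinge that can be put in normal form is torsion-free. -/
theorem cyclic_normal_form_torsion_free {n : ℕ} {α : Type} (G : RawGraph n α)
    (hG : G.IsGraph) (m : ℕ) (u : Fin (m+2) → α) (p : Fin (m+1) → Port n)
    (γ : Fin (m+1) → Equiv.Perm (Port n)) (q : Fin (m+1) → Port n)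
    (hpath : IsPath G (m+1) u p γ q) (hcyc : u (Fin.last (m+1)) = u 0)
    (hnf : NormalForm G u p γ q) :
    ∀ (F : Set (Port n)) (kk : ℕ), F ⊆ G.portsAt (u 0) → F.ncard = kk + 1 →
      HingeConds p γ q F → (⇑(compUpTo γ (m+1))) '' F = F := by
  intro F kk hF hcard hH
  obtain ⟨-, h2, -, -, h5, -, -⟩ := hG
  have key : ∀ i : ℕ, ∀ hi : i < m + 2,
      (⇑(compUpTo γ i)) '' F = F ∧ F ⊆ G.portsAt (u ⟨i, hi⟩) := by
    intro i
    induction i with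
    | zero =>
      intro hi
      refine ⟨?_, hF⟩
      simp [compUpTo]
    | succ i ih =>
      intro hi
      obtain ⟨h1, hsub⟩ := ih (by omega)
      have hi' : i < m + 1 := by omega
      have he := hpath ⟨i, hi'⟩
      obtain ⟨hγ, hports⟩ := hnf ⟨i, hi'⟩
      have hp := (hH ⟨i, hi'⟩).1
      simp only [h1] at hp
      have hc : (⟨i, hi'⟩ : Fin (m+1)).castSucc = ⟨i, by omega⟩ := rfl
      have hs : (⟨i, hi'⟩ : Fin (m+1)).succ = ⟨i+1, hi⟩ := rfl
      rw [hc, hs] at hports he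
      obtain ⟨hu, hv, -⟩ := h2 _ he
      have cu := h5 _ hu
      have cv := h5 _ hv
      simp only at cu cv
      have hpin : p ⟨i, hi'⟩ ∈ G.portsAt (u ⟨i, by omega⟩) := Or.inr ⟨_, he, rfl, rfl⟩
      have hq : q ⟨i, hi'⟩ ∉ G.portsAt (u ⟨i, by omega⟩) \ {p ⟨i, hi'⟩} := by
        intro hq
        rw [hports, Set.insert_eq_of_mem hq, Set.ncard_sdiff_singleton_of_mem hpin, cu] at cv
        omega
      have hqF : q ⟨i, hi'⟩ ∉ F := by
        intro hqF
        refine hq ⟨hsub hqF, ?_⟩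
        intro h
        rw [Set.mem_singleton_iff] at h
        exact hp (h ▸ hqF)
      have hcomp : compUpTo γ (i+1) = γ ⟨i, hi'⟩ * compUpTo γ i := by
        unfold compUpTo
        rw [List.take_succ_eq_append_getElem (by rw [List.length_ofFn]; exact hi'),
          List.reverse_append, List.prod_append, List.getElem_ofFn]
        simp only [List.reverse_singleton, List.prod_singleton]
      refine ⟨?_, ?_⟩
      · rw [hcomp, Equiv.Perm.coe_mul, Set.image_comp, h1, hγ]
        have : Set.EqOn (⇑(Equiv.swap (p ⟨i, hi'⟩) (q ⟨i, hi'⟩))) id F := by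
          intro x hx
          exact Equiv.swap_apply_of_ne_of_ne (fun h => hp (h ▸ hx)) (fun h => hqF (h ▸ hx))
        rw [this.image_eq, Set.image_id]
      · rw [hports]
        intro x hx
        exact Or.inr ⟨hsub hx, fun h => hp ((Set.mem_singleton_iff.mp h) ▸ hx)⟩
  exact (key (m+1) (by omega)).1
end CDDM
end

section
/- The canonical sphere ∂Δ_{n+1} — the complete graph on n+2 vertices v_0,…,v_{n+1} with edges (v_i:j, s_{ij}, v_j:i) for all i ≠ j in {0,…,n+1}, where s_{ij} is the transposition of i and j — is a graph (it satisfies the five defining conditions of graphs), every hinge in it is in normal form, and consequently it contains no torsion. -/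
namespace CDDM

open Equiv Set

variable {n : ℕ} {α β : Type}

theorem sphere_ports {n : ℕ} {α : Type} (φ : Fin (n+2) → α)
    (hφ : Function.Injective φ) (i : Fin (n+2)) :
    (sphereAt φ).portsAt (φ i) = {j | j ≠ i} := by
  ext j
  constructor
  · rintro (h | ⟨e, ⟨a, b, hab, rfl⟩, h1, h2⟩)
    · exact absurd h (Set.notMem_empty _)
    · have h1 := hφ h1
      simp only at h1 h2
      subst h1 h2
      exact hab.symm
  · intro h
    exact Or.inr ⟨_, ⟨i, j, Ne.symm h, rfl⟩, rfl, rfl⟩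

theorem sphere_isGraph {n : ℕ} {α : Type} (φ : Fin (n+2) → α)
    (hφ : Function.Injective φ) : (sphereAt φ).IsGraph := by
  refine ⟨?_, ?_, ?_, ?_, ?_, ?_, ?_⟩
  · intro s hs
    exact absurd hs (Set.notMem_empty _)
  · rintro e ⟨i, j, hij, rfl⟩
    exact ⟨⟨i, rfl⟩, ⟨j, rfl⟩, Equiv.Perm.sign_swap hij⟩
  · intro e _
    exact Set.notMem_empty _
  · rintro e ⟨i, j, hij, rfl⟩ e' ⟨i', j', hij', rfl⟩ h1 h2
    have h1 := hφ h1
    simp only at h2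
    subst h1 h2
    rfl
  · rintro u ⟨i, rfl⟩
    rw [sphere_ports φ hφ]
    have : {j : Fin (n+2) | j ≠ i} = (((Finset.univ : Finset (Fin (n+2))).erase i : Finset _) : Set _) := by
      ext j; simp
    rw [this, Set.ncard_coe_finset, Finset.card_erase_of_mem (Finset.mem_univ _)]
    simp
  · rintro e ⟨i, j, hij, rfl⟩
    refine ⟨?_, Equiv.swap_apply_right _ _⟩
    simp only
    rw [sphere_ports φ hφ, sphere_ports φ hφ]
    ext x
    rw [Equiv.image_eq_preimage_symm]
    simp only [Set.mem_preimage, Set.mem_setOf_eq, Equiv.symm_swap, ne_eq]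
    rw [Equiv.swap_apply_eq_iff, Equiv.swap_apply_left]
  · rintro e ⟨i, j, hij, rfl⟩
    refine ⟨j, i, hij.symm, ?_⟩
    simp [Edge.inv, Equiv.swap_comm]

theorem compUpTo_succ' {n k : ℕ} (γ : Fin k → Equiv.Perm (Port n)) (i : Fin k) :
    compUpTo γ (i.val + 1) = γ i * compUpTo γ i.val := by
  unfold compUpTo
  rw [List.take_succ_eq_append_getElem (by simp)]
  simp

theorem sphere_hinge {n : ℕ} {α : Type} (φ : Fin (n+2) → α)
    (hφ : Function.Injective φ) {k : ℕ} {u : Fin (k+1) → α} {p : Fin k → Port n}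
    {γ : Fin k → Equiv.Perm (Port n)} {q : Fin k → Port n} {F : Set (Port n)}
    (h : IsHinge (sphereAt φ) k u p γ q F) :
    ∀ (m : ℕ) (hm : m < k + 1), (⇑(compUpTo γ m)) '' F = F ∧
      F ⊆ (sphereAt φ).portsAt (u ⟨m, hm⟩) := by
  obtain ⟨hp, -, hF, hc⟩ := h
  intro m
  induction m with
  | zero =>
    intro hm
    exact ⟨by simp [compUpTo], hF⟩
  | succ m ih =>
    intro hm
    obtain ⟨h1, h2⟩ := ih (by omega)
    have hmk : m < k := by omega
    obtain ⟨i, j, hij, he⟩ := hp ⟨m, hmk⟩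
    have hcm := (hc ⟨m, hmk⟩).1
    simp only [Edge.mk.injEq] at he
    obtain ⟨e1, e2, e3, e4, e5⟩ := he
    change u ⟨m, _⟩ = _ at e1
    change u ⟨m + 1, _⟩ = _ at e4
    simp only at hcm
    rw [h1, e2] at hcm
    rw [e1, sphere_ports φ hφ] at h2
    have hj : ∀ x ∈ F, x ≠ j := fun x hx hxj => hcm (hxj ▸ hx)
    constructor
    · rw [compUpTo_succ' γ ⟨m, hmk⟩, Equiv.Perm.coe_mul, Set.image_comp, h1, e3]
      calc (⇑(Equiv.swap i j)) '' F = id '' F :=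
            Set.image_congr fun x hx => Equiv.swap_apply_of_ne_of_ne (h2 hx) (hj x hx)
        _ = F := Set.image_id F
    · rw [e4, sphere_ports φ hφ]
      exact hj

/-- The canonical sphere `∂Δ_{n+1}` is a graph, all its hinges (indeed all
its paths) are in normal form, and it contains no torsion. -/
theorem canonical_sphere_sound {n : ℕ} {α : Type} (φ : Fin (n+2) → α)
    (hφ : Function.Injective φ) :
    (sphereAt φ).IsGraph ∧
    (∀ (k : ℕ) (u : Fin (k+1) → α) (p : Fin k → Port n)
        (γ : Fin k → Equiv.Perm (Port n)) (q : Fin k → Port n),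
        IsPath (sphereAt φ) k u p γ q → NormalForm (sphereAt φ) u p γ q) ∧
    ¬ HasTorsion (sphereAt φ) := by
  refine ⟨sphere_isGraph φ hφ, ?_, ?_⟩
  · intro k u p γ q hp m
    obtain ⟨i, j, hij, he⟩ := hp m
    simp only [Edge.mk.injEq] at he
    obtain ⟨e1, e2, e3, e4, e5⟩ := he
    rw [e1, e2, e3, e4, e5, sphere_ports φ hφ, sphere_ports φ hφ]
    refine ⟨Equiv.swap_comm _ _, ?_⟩
    ext x
    simp only [Set.mem_setOf_eq, Set.mem_insert_iff, Set.mem_diff, Set.mem_singleton_iff]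
    by_cases hx : x = i
    · simp [hx, hij]
    · simp [hx]
  · rintro ⟨u, F, F', hne, k, w, p, γ, q, hh, -, -, hF'⟩
    exact hne (by rw [hF', (sphere_hinge φ hφ hh k (by omega)).1])

end CDDM
end

section
/- If f is a strongly-rotation-commuting local rule of radius r and F is the causal graph dynamics it induces, i.e., F(G) = ⋃_{v∈G} f(G^r_v), then F is rotation-commuting: for every graph G and every rotation sequence r̄ there exists a rotation sequence r̄* such that F(r̄ G) = r̄* F(G). -/
namespace CDDM

open Equiv Set

variable {n : ℕ} {α β : Type}

/-- simultaneous rotation of an edge -/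
def rAE (g : α → Equiv.Perm (Port n)) (e : Edge n α) : Edge n α :=
  ⟨e.u, g e.u e.p, g e.v * e.γ * (g e.u)⁻¹, e.v, g e.v e.q⟩

/-- simultaneous rotation of a graph -/
def rA (g : α → Equiv.Perm (Port n)) (G : RawGraph n α) : RawGraph n α where
  verts := G.verts
  semis := (fun s => (s.1, g s.1 s.2)) '' G.semis
  edges := rAE g '' G.edges

theorem applySeq_eq (s : RotSeq n α) (G : RawGraph n α) : applySeq s G = rA (seqAt s) G := by
  classical
  induction s with
  | nil =>
    have h : ∀ e : Edge n α, rAE (fun _ => 1) e = e := by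
      intro e; simp [rAE]
    have h2 : (rAE (fun _ => 1) : Edge n α → Edge n α) = id := funext h
    have h3 : seqAt ([] : RotSeq n α) = fun _ => 1 := rfl
    rw [h3]
    simp [applySeq, rA, h2]
  | cons x s ih =>
    have e1 : applySeq (x :: s) G = rotG x.2 x.1 (applySeq s G) := rfl
    rw [e1, ih]
    have e2 : ∀ u, seqAt (x :: s) u = if u = x.1 then x.2 * seqAt s u else seqAt s u := by
      intro u
      by_cases h : u = x.1
      · subst h; simp [seqAt]
      · have h' : ¬ x.1 = u := fun h' => h h'.symm
        simp [seqAt, h, h']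
    simp only [rotG, rA, Set.image_image]
    refine RawGraph.ext rfl ?_ ?_
    · simp only
      apply Set.image_congr
      intro t _
      by_cases h : t.1 = x.1
      · simp [e2, h]
      · simp [e2, h]
    · simp only
      apply Set.image_congr
      intro e _
      by_cases h : e.u = x.1 <;> by_cases h' : e.v = x.1 <;>
        simp [rotEdge, rAE, e2, h, h', mul_assoc]

theorem rAE_inj (g : α → Equiv.Perm (Port n)) : Function.Injective (rAE g) := by
  rintro ⟨u, p, γ, v, q⟩ ⟨u', p', γ', v', q'⟩ h
  simp only [rAE, Edge.mk.injEq] at h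
  obtain ⟨rfl, h2, h3, rfl, h5⟩ := h
  simp at h2 h3 h5
  simp [h2, h3, h5]

theorem mem_rA_semis (g : α → Equiv.Perm (Port n)) (G : RawGraph n α) (u : α) (p : Port n) :
    (u, p) ∈ (rA g G).semis ↔ (u, (g u)⁻¹ p) ∈ G.semis := by
  constructor
  · rintro ⟨⟨a, b⟩, h, h'⟩
    simp only [Prod.mk.injEq] at h'
    obtain ⟨rfl, rfl⟩ := h'
    simpa using h
  · intro h
    exact ⟨_, h, by simp⟩

theorem portsAt_rA (g : α → Equiv.Perm (Port n)) (G : RawGraph n α) (u : α) :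
    (rA g G).portsAt u = g u '' G.portsAt u := by
  ext p
  constructor
  · rintro (h | ⟨_, ⟨e, he, rfl⟩, h1, h2⟩)
    · exact ⟨(g u)⁻¹ p, Or.inl ((mem_rA_semis _ _ _ _).1 h), by simp⟩
    · refine ⟨e.p, Or.inr ⟨e, he, h1, rfl⟩, ?_⟩
      simp only [rAE] at h1 h2
      rw [← h1, h2]
  · rintro ⟨q, (h | ⟨e, he, rfl, rfl⟩), rfl⟩
    · left; rw [mem_rA_semis]; simpa using h
    · right; exact ⟨_, ⟨e, he, rfl⟩, rfl, rfl⟩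

theorem isGraph_rA (g : α → Equiv.Perm (Port n)) (hg : ∀ u, IsRotation (g u))
    {G : RawGraph n α} (hG : G.IsGraph) : (rA g G).IsGraph := by
  obtain ⟨h1, h2, h3, h4, h5, h6, h7⟩ := hG
  refine ⟨?_, ?_, ?_, ?_, ?_, ?_, ?_⟩
  · rintro _ ⟨s, hs, rfl⟩; exact h1 s hs
  · rintro _ ⟨e, he, rfl⟩
    obtain ⟨a, b, c⟩ := h2 e he
    refine ⟨a, b, ?_⟩
    have e1 := hg e.u
    have e2 := hg e.v
    unfold IsRotation at e1 e2
    unfold IsGluing at c ⊢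
    simp [rAE, e1, e2, c]
  · rintro _ ⟨e, he, rfl⟩ h
    rw [mem_rA_semis] at h
    simp [rAE] at h
    exact h3 e he h
  · rintro _ ⟨e, he, rfl⟩ _ ⟨e', he', rfl⟩ hu hp
    simp only [rAE] at hu hp
    rw [hu] at hp
    rw [h4 e he e' he' hu ((g e'.u).injective hp)]
  · intro u hu
    rw [portsAt_rA, Set.ncard_image_of_injective _ (g u).injective]
    exact h5 u hu
  · rintro _ ⟨e, he, rfl⟩
    obtain ⟨a, b⟩ := h6 e he
    rw [portsAt_rA, portsAt_rA]
    constructor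
    · simp only [rAE]
      rw [← a]
      simp [Set.image_image]
    · simp [rAE, b]
  · rintro _ ⟨e, he, rfl⟩
    refine ⟨e.inv, h7 e he, ?_⟩
    simp [rAE, Edge.inv, mul_assoc]

theorem adj_rA (g : α → Equiv.Perm (Port n)) (G : RawGraph n α) (u v : α) :
    Adj (rA g G) u v ↔ Adj G u v := by
  constructor
  · rintro ⟨_, ⟨e, he, rfl⟩, h1, h2⟩; exact ⟨e, he, h1, h2⟩
  · rintro ⟨e, he, h1, h2⟩; exact ⟨_, ⟨e, he, rfl⟩, h1, h2⟩

theorem ReachLE.mono' {G H : RawGraph n α} (h : ∀ u v, Adj G u v → Adj H u v) {d u v}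
    (hr : ReachLE G d u v) : ReachLE H d u v := by
  induction hr with
  | refl d u => exact .refl d u
  | step a _ ih => exact .step (h _ _ a) ih

theorem ball_rA (g : α → Equiv.Perm (Port n)) (G : RawGraph n α) (v : α) (d : ℕ) :
    ball (rA g G) v d = ball G v d := by
  ext w
  exact ⟨ReachLE.mono' fun u v => (adj_rA g G u v).1, ReachLE.mono' fun u v => (adj_rA g G u v).2⟩

theorem inducedSub_rA (g : α → Equiv.Perm (Port n)) (G : RawGraph n α) (W : Set α) :
    inducedSub (rA g G) W = rA g (inducedSub G W) := by
  refine RawGraph.ext rfl ?_ ?_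
  · ext ⟨u, p⟩
    rw [mem_rA_semis]
    simp only [inducedSub, Set.mem_setOf_eq]
    rw [mem_rA_semis]
    refine and_congr Iff.rfl (or_congr Iff.rfl ?_)
    constructor
    · rintro ⟨_, ⟨e, he, rfl⟩, h1, h2, h3⟩
      simp only [rAE] at h1 h2 h3
      refine ⟨e, he, h1, ?_, h3⟩
      rw [← h2, ← h1]; simp
    · rintro ⟨e, he, h1, h2, h3⟩
      refine ⟨_, ⟨e, he, rfl⟩, h1, ?_, h3⟩
      simp [rAE, h1, h2]
  · ext e
    constructor
    · rintro ⟨⟨e, he, rfl⟩, h⟩; exact ⟨e, ⟨he, h⟩, rfl⟩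
    · rintro ⟨e, ⟨he, h⟩, rfl⟩; exact ⟨⟨e, he, rfl⟩, h⟩

theorem disk_rA (g : α → Equiv.Perm (Port n)) (G : RawGraph n α) (v : α) (r : ℕ) :
    disk (rA g G) v r = rA g (disk G v r) := by
  unfold disk; rw [ball_rA, inducedSub_rA]

theorem rA_congr {g g' : α → Equiv.Perm (Port n)} {G : RawGraph n α}
    (hs : ∀ s ∈ G.semis, s.1 ∈ G.verts) (he : ∀ e ∈ G.edges, e.u ∈ G.verts ∧ e.v ∈ G.verts)
    (h : ∀ u ∈ G.verts, g u = g' u) : rA g G = rA g' G := by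
  refine RawGraph.ext rfl ?_ ?_
  · apply Set.image_congr
    intro s h'; simp [h _ (hs s h')]
  · apply Set.image_congr
    intro e h'; simp [rAE, h _ (he e h').1, h _ (he e h').2]

theorem rA_one (G : RawGraph n α) : rA (fun _ => 1) G = G :=
  (applySeq_eq [] G).symm

theorem seqAt_of_not (s : RotSeq n α) (u : α) (h : ¬ SeqActsAt s u) : seqAt s u = 1 := by
  induction s with
  | nil => rfl
  | cons x s ih =>
    have h1 : ¬ x.1 = u := fun h' => h ⟨x, by simp, h'⟩
    have h2 : ¬ SeqActsAt s u := by
      rintro ⟨y, hy, hy'⟩; exact h ⟨y, by simp [hy], hy'⟩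
    have := ih h2
    simp only [seqAt] at this ⊢
    simp [h1, this]

theorem seqAt_rot (s : RotSeq n α) (hs : IsRotSeq s) (u : α) : IsRotation (seqAt s u) := by
  induction s with
  | nil => simp [seqAt, IsRotation]
  | cons x s ih =>
    have h1 : IsRotation x.2 := hs x (by simp)
    have h2 : IsRotation (seqAt s u) := ih (fun y hy => hs y (by simp [hy]))
    simp only [seqAt, IsRotation] at h1 h2 ⊢
    by_cases h : x.1 = u
    · simp [h, h1, h2]
    · simp [h, h2]

theorem exists_seq (T : Set α) (hT : T.Finite) : ∀ g : α → Equiv.Perm (Port n),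
    (∀ c ∉ T, g c = 1) → (∀ c, IsRotation (g c)) → ∃ s : RotSeq n α, IsRotSeq s ∧ seqAt s = g := by
  classical
  induction T, hT using Set.Finite.induction_on with
  | empty =>
    intro g h _
    refine ⟨[], by simp [IsRotSeq], ?_⟩
    ext1 c; rw [h c (by simp)]; rfl
  | @insert a T ha _ ih =>
    intro g h hg
    obtain ⟨s, hs, hs'⟩ := ih (Function.update g a 1)
      (by
        intro c hc
        by_cases hca : c = a
        · subst hca; simp
        · simp [hca, h c (by simp [hc, hca])])
      (by
        intro c
        by_cases hca : c = a
        · subst hca; simp [IsRotation]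
        · simpa [hca] using hg c)
    refine ⟨(a, g a) :: s, ?_, ?_⟩
    · intro x hx
      rcases List.mem_cons.1 hx with rfl | hx
      · exact hg a
      · exact hs x hx
    · ext1 c
      have e1 : seqAt ((a, g a) :: s) c = if a = c then g a * seqAt s c else seqAt s c := by
        simp [seqAt]
      rw [e1, hs']
      by_cases hca : a = c
      · subst hca; simp
      · have : ¬ c = a := fun h => hca h.symm
        simp [hca, this]

theorem adj_symm {G : RawGraph n α} (hG : G.IsGraph) {u v : α} (h : Adj G u v) : Adj G v u := by
  obtain ⟨e, he, rfl, rfl⟩ := h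
  exact ⟨e.inv, hG.2.2.2.2.2.2 e he, rfl, rfl⟩

theorem ReachLE.snoc {G : RawGraph n α} {d u v w} (h : ReachLE G d u v) (a : Adj G v w) :
    ReachLE G (d+1) u w := by
  induction h with
  | refl d u => exact .step a (.refl d w)
  | step b _ ih => exact .step b (ih a)

theorem ReachLE.symm' {G : RawGraph n α} (hG : G.IsGraph) {d u v} (h : ReachLE G d u v) :
    ReachLE G d v u := by
  induction h with
  | refl d u => exact .refl d u
  | step b _ ih => exact ih.snoc (adj_symm hG b)

theorem adj_finite {G : RawGraph n α} (hG : G.IsGraph) (u : α) : {v | Adj G u v}.Finite := by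
  have h1 : {e | e ∈ G.edges ∧ e.u = u}.Finite := by
    apply Set.Finite.of_finite_image (f := fun e => e.p) (Set.toFinite _)
    rintro e ⟨he, hu⟩ e' ⟨he', hu'⟩ h
    exact hG.2.2.2.1 e he e' he' (hu.trans hu'.symm) h
  refine (h1.image (fun e => e.v)).subset ?_
  rintro v ⟨e, he, h, h'⟩
  exact ⟨e, ⟨he, h⟩, h'⟩

theorem ball_finite {G : RawGraph n α} (hG : G.IsGraph) (d : ℕ) : ∀ u : α, (ball G u d).Finite := by
  induction d with
  | zero =>
    intro u
    refine (Set.finite_singleton u).subset ?_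
    intro v hv
    cases hv; rfl
  | succ d ih =>
    intro u
    refine ((Set.finite_singleton u).union ((adj_finite hG u).biUnion fun v _ => ih v)).subset ?_
    intro v hv
    cases hv with
    | refl => left; rfl
    | step a h => right; exact Set.mem_biUnion a h

theorem cons_semis {G H : RawGraph n α} (hH : H.IsGraph) (h : Consistent G H)
    {s : α × Port n} (hs : s ∈ G.semis) (h1 : s.1 ∈ G.verts) (h2 : s.1 ∈ H.verts) :
    s ∈ H.semis := by
  rcases (h s.1 ⟨h1, h2⟩ s.1 (Or.inl h1) s.2 s.2 1).1 (Or.inr hs) with h' | h'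
  · have := (hH.2.1 _ h').2.2
    simp [IsGluing] at this
  · exact h'

theorem cons_edges {G H : RawGraph n α} (hG : G.IsGraph) (hH : H.IsGraph) (h : Consistent G H)
    (h' : Consistent H G)
    {e : Edge n α} (he : e ∈ G.edges) (h2 : e.u ∈ H.verts) :
    e ∈ H.edges := by
  obtain ⟨a, b, _⟩ := hG.2.1 e he
  rcases (h e.u ⟨a, h2⟩ e.v (Or.inl b) e.p e.q e.γ).1 (Or.inl he) with h1 | h1
  · exact h1
  · exact absurd (cons_semis hG h' h1 h2 a) (hG.2.2.1 e he)

theorem union_edges {ι : Type} (H : ι → RawGraph n α) (hH : ∀ i, (H i).IsGraph)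
    (hc : ∀ i j, Consistent (H i) (H j)) (k : α → ι)
    (hk : ∀ i, ∀ c ∈ (H i).verts, c ∈ (H (k c)).verts) (e : Edge n α) :
    e ∈ (unionFam H).edges ↔ e ∈ (H (k e.u)).edges := by
  simp only [unionFam, Set.mem_iUnion]
  constructor
  · rintro ⟨i, hi⟩
    exact cons_edges (hH _) (hH _) (hc _ _) (hc _ _) hi (hk i _ ((hH i).2.1 e hi).1)
  · intro h; exact ⟨_, h⟩

theorem union_semis {ι : Type} (H : ι → RawGraph n α) (hH : ∀ i, (H i).IsGraph)
    (hc : ∀ i j, Consistent (H i) (H j)) (k : α → ι)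
    (hk : ∀ i, ∀ c ∈ (H i).verts, c ∈ (H (k c)).verts) (s : α × Port n) :
    s ∈ (unionFam H).semis ↔ s ∈ (H (k s.1)).semis := by
  simp only [unionFam, Set.mem_setOf_eq]
  constructor
  · rintro ⟨⟨i, hi⟩, _⟩
    have := (hH i).1 s hi
    exact cons_semis (hH _) (hc _ _) hi this (hk i _ this)
  · intro h
    refine ⟨⟨_, h⟩, ?_⟩
    rintro i e he ⟨h1, h2⟩
    have h3 := (hH _).1 s h
    have h4 := ((hH i).2.1 e he).1
    have h5 := cons_semis (hH i) (hc _ i) h h3 (h1 ▸ h4)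
    refine (hH i).2.2.1 e he ?_
    rw [h1, h2]; exact h5

/-- A strongly-rotation-commuting local rule induces a rotation-commuting
causal graph dynamics. -/
theorem strongly_rot_commuting_induces_rot_commuting {n r : ℕ} (L : LocalRule n r)
    (hL : StronglyRotCommuting L) :
    RotCommuting (induced L.f r) := by
  classical
  intro G hG s hs
  have hG' : (rA (seqAt s) G).IsGraph := isGraph_rA _ (seqAt_rot s hs) hG
  have hdisk : ∀ v : G.verts, IsDisk (disk G (v : ℕ) r) r := fun v => ⟨G, v, hG, v.2, rfl⟩
  have hdisk' : ∀ v : G.verts, IsDisk (disk (rA (seqAt s) G) (v : ℕ) r) r :=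
    fun v => ⟨_, v, hG', v.2, rfl⟩
  -- choice of conjugates
  have hconj : ∀ v : G.verts, ∃ s' : RotSeq n CName, IsRotSeq s' ∧
      L.f (applySeq s (disk G (v : ℕ) r)) = applySeq s' (L.f (disk G (v : ℕ) r)) ∧
      ((∀ u ∈ ball G (v : ℕ) (r+1), ¬ SeqActsAt s u) → s' = []) := by
    intro v
    by_cases h : ∀ u ∈ ball G (v : ℕ) (r+1), ¬ SeqActsAt s u
    · refine ⟨[], by simp [IsRotSeq], ?_, fun _ => rfl⟩
      have : applySeq s (disk G (v : ℕ) r) = disk G (v : ℕ) r := by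
        rw [applySeq_eq, ← rA_one (disk G (v : ℕ) r), rA_one (disk G (v : ℕ) r)]
        conv_rhs => rw [← rA_one (disk G (v : ℕ) r)]
        apply rA_congr
        · intro t ht; exact ht.1
        · intro e he
          obtain ⟨a, b, c⟩ := he
          obtain ⟨d1, d2, _⟩ := hG.2.1 e a
          exact ⟨⟨d1, b⟩, ⟨d2, c⟩⟩
        · intro u hu
          exact seqAt_of_not _ _ (h u hu.2)
      rw [this]; rfl
    · obtain ⟨s', h1, h2⟩ := hL.1 _ (hdisk v) s hs
      exact ⟨s', h1, h2, fun h' => absurd h' h⟩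
  choose σ hσ1 hσ2 hσ3 using hconj
  let H : G.verts → RawGraph n CName := fun v => L.f (disk G (v : ℕ) r)
  let H' : G.verts → RawGraph n CName := fun v => L.f (disk (rA (seqAt s) G) (v : ℕ) r)
  have hHH' : ∀ v, H' v = rA (seqAt (σ v)) (H v) := by
    intro v
    have := hσ2 v
    rw [applySeq_eq, applySeq_eq, ← disk_rA] at this
    exact this
  have hH : ∀ v, (H v).IsGraph := fun v => L.isGraph _ (hdisk v)
  have hH' : ∀ v, (H' v).IsGraph := fun v => L.isGraph _ (hdisk' v)
  have hc : ∀ v w, Consistent (H v) (H w) := fun v w => L.consist G hG v v.2 w w.2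
  have hc' : ∀ v w, Consistent (H' v) (H' w) := fun v w => L.consist _ hG' v v.2 w w.2
  have hF : induced L.f r G = unionFam H := rfl
  have hF' : induced L.f r (applySeq s G) = unionFam H' := by rw [applySeq_eq]; rfl
  rw [hF, hF']
  have hverts : ∀ v, (H' v).verts = (H v).verts := by intro v; rw [hHH']; rfl
  by_cases hne : Nonempty G.verts
  swap
  · refine ⟨[], by simp [IsRotSeq], ?_⟩
    have : H' = H := by ext1 v; exact absurd ⟨v⟩ hne
    rw [this]; rfl
  obtain ⟨v₀⟩ := hne
  -- choice of a disk for every vertex of the image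
  have hk0 : ∀ c : CName, ∃ v : G.verts, ∀ i, c ∈ (H i).verts → c ∈ (H v).verts := by
    intro c
    by_cases h : ∃ v, c ∈ (H v).verts
    · obtain ⟨v, hv⟩ := h; exact ⟨v, fun _ _ => hv⟩
    · exact ⟨v₀, fun i hi => absurd ⟨i, hi⟩ h⟩
  choose k hk0 using hk0
  have hk : ∀ i, ∀ c ∈ (H i).verts, c ∈ (H (k c)).verts := fun i c h => hk0 c i h
  have hk' : ∀ i, ∀ c ∈ (H' i).verts, c ∈ (H' (k c)).verts := by
    intro i c h; rw [hverts] at h ⊢; exact hk i c h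
  let g : CName → Equiv.Perm (Port n) := fun c =>
    if c ∈ (H (k c)).verts then seqAt (σ (k c)) c else 1
  have hgk : ∀ c, c ∈ (H (k c)).verts → g c = seqAt (σ (k c)) c := fun c h => if_pos h
  -- agreement on common nonempty names
  have hinter : ∀ v w : G.verts, ∀ c, c ∈ (H v).verts → c ∈ (H w).verts → c ≠ ∅ →
      ((disk G (v : ℕ) r).verts ∩ (disk G (w : ℕ) r).verts).Nonempty := by
    intro v w c hv hw hc0
    obtain ⟨x, hx⟩ := Finset.nonempty_iff_ne_empty.2 hc0
    exact ⟨x.1, (L.bound _ (hdisk v) c hv x hx).1, (L.bound _ (hdisk w) c hw x hx).1⟩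
  have hagree : ∀ v w : G.verts, ∀ c d, c ∈ (H v).verts → c ∈ (H w).verts → c ≠ ∅ →
      d ∈ (H v).verts → d ∈ (H w).verts → seqAt (σ v) d = seqAt (σ w) d := by
    intro v w c d hv hw hc0 hdv hdw
    exact hL.2 _ _ ⟨G, v, w, hG, v.2, w.2, rfl, rfl, hinter v w c hv hw hc0⟩ s hs _ _
      (hσ1 v) (hσ1 w) (hσ2 v) (hσ2 w) d ⟨hdv, hdw⟩
  have hedge : ∀ e ∈ (H (k e.u)).edges, rAE g e = rAE (seqAt (σ (k e.u))) e := by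
    intro e he
    obtain ⟨a, b, _⟩ := (hH _).2.1 e he
    have h1 : g e.u = seqAt (σ (k e.u)) e.u := hgk _ a
    have h2 : g e.v = seqAt (σ (k e.u)) e.v := by
      have hb := hk _ _ b
      rw [hgk _ hb]
      by_cases hv : e.v = ∅
      · by_cases hu : e.u = ∅
        · rw [hu, hv]
        · have hi := (hH _).2.2.2.2.2.2 e he
          have hi' : e.inv ∈ (H (k e.v)).edges :=
            cons_edges (hH _) (hH _) (hc _ _) (hc _ _) hi hb
          have hu' : e.u ∈ (H (k e.v)).verts := ((hH _).2.1 _ hi').2.1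
          exact hagree _ _ e.u e.v hu' a hu hb b
      · exact hagree _ _ e.v e.v hb b hv hb b
    simp only [rAE, h1, h2]
  -- finiteness of the support
  have hfin : {c | g c ≠ 1}.Finite := by
    have hS : {u | SeqActsAt s u}.Finite := by
      refine (s.map Prod.fst).toFinset.finite_toSet.subset ?_
      rintro u ⟨x, hx, rfl⟩
      simp only [List.coe_toFinset, Set.mem_setOf_eq, List.mem_map]
      exact ⟨x, hx, rfl⟩
    have hV : (⋃ u ∈ {u | SeqActsAt s u}, ball G u (r+1)).Finite :=
      hS.biUnion fun u _ => ball_finite hG _ u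
    have hW : (⋃ v ∈ (⋃ u ∈ {u | SeqActsAt s u}, ball G u (r+1)), ball G v (r+1)).Finite :=
      hV.biUnion fun u _ => ball_finite hG _ u
    let A : Finset (ℕ × ℕ) := hW.toFinset ×ˢ Finset.range (L.b + 1)
    refine A.powerset.finite_toSet.subset ?_
    intro c hgc
    have hcv : c ∈ (H (k c)).verts := by
      by_contra h
      exact hgc (if_neg h)
    have hgc' : seqAt (σ (k c)) c ≠ 1 := by rw [← hgk c hcv]; exact hgc
    have : ∃ u ∈ ball G (k c : ℕ) (r+1), SeqActsAt s u := by
      by_contra h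
      push Not at h
      apply hgc'
      rw [hσ3 (k c) h]; rfl
    obtain ⟨u, hu, hsu⟩ := this
    simp only [Finset.coe_powerset, Set.mem_preimage, Set.mem_powerset_iff, Finset.coe_subset]
    intro x hx
    obtain ⟨b1, b2⟩ := L.bound _ (hdisk (k c)) c hcv x hx
    simp only [A, Finset.mem_product, Set.Finite.mem_toFinset, Finset.mem_range]
    refine ⟨?_, by omega⟩
    refine Set.mem_biUnion (x := (k c : ℕ)) ?_ b1.2
    exact Set.mem_biUnion (x := u) hsu (ReachLE.symm' hG hu)
  obtain ⟨s', hs', hsg⟩ := exists_seq {c | g c ≠ 1} hfin g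
    (by intro c h; by_contra h'; exact h h')
    (by
      intro c
      by_cases h : c ∈ (H (k c)).verts
      · rw [hgk c h]; exact seqAt_rot _ (hσ1 _) _
      · have : g c = 1 := if_neg h
        rw [this]; simp [IsRotation])
  refine ⟨s', hs', ?_⟩
  rw [applySeq_eq, hsg]
  refine RawGraph.ext ?_ ?_ ?_
  · simp only [unionFam, rA, hverts]
  · ext ⟨c, p⟩
    rw [union_semis H' hH' hc' k hk', mem_rA_semis, union_semis H hH hc k hk]
    simp only
    rw [hHH', mem_rA_semis]
    by_cases h : c ∈ (H (k c)).verts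
    · rw [hgk c h]
    · constructor
      · intro h'; exact absurd ((hH _).1 _ h') h
      · intro h'; exact absurd ((hH _).1 _ h') h
  · ext e
    rw [union_edges H' hH' hc' k hk', hHH']
    constructor
    · rintro ⟨e', he', h⟩
      have hu : e'.u = e.u := by rw [← h]; rfl
      rw [← hu] at he' h
      refine ⟨e', (union_edges H hH hc k hk e').2 he', ?_⟩
      rw [hedge e' he', h]
    · rintro ⟨e', he', rfl⟩
      have he := (union_edges H hH hc k hk e').1 he'
      exact ⟨e', he, (hedge e' he).symm⟩

end CDDM
end
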